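/- Every element z of order 3 in the Paige loop over F₂ is contained in a subloop isomorphic to S₃; equivalently, there exists an involution x with zx of order 2. -/

import Mathlib

/-- Zorn vector matrices over the field with two elements. -/
structure Zorn2 where
  a : ZMod 2
  alpha : Fin 3 → ZMod 2
  beta : Fin 3 → ZMod 2
  b : ZMod 2

namespace Zorn2

/-- Standard dot product on `F₂³`. -/
def zdot (u v : Fin 3 → ZMod 2) : ZMod 2 := u 0 * v 0 + u 1 * v 1 + u 2 * v 2

/-- Standard cross product on `F₂³`. -/
def zcross (u v : Fin 3 → ZMod 2) : Fin 3 → ZMod 2 :=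
  ![u 1 * v 2 - u 2 * v 1, u 2 * v 0 - u 0 * v 2, u 0 * v 1 - u 1 * v 0]

/-- Zorn's vector matrix multiplication. -/
instance : Mul Zorn2 :=
  ⟨fun x y =>
    { a := x.a * y.a + zdot x.alpha y.beta
      alpha := fun i => x.a * y.alpha i + x.alpha i * y.b - zcross x.beta y.beta i
      beta := fun i => x.beta i * y.a + x.b * y.beta i + zcross x.alpha y.alpha i
      b := zdot x.beta y.alpha + x.b * y.b }⟩

instance : One Zorn2 := ⟨{ a := 1, alpha := fun _ => 0, beta := fun _ => 0, b := 1 }⟩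

instance : Add Zorn2 :=
  ⟨fun x y => { a := x.a + y.a, alpha := x.alpha + y.alpha,
                beta := x.beta + y.beta, b := x.b + y.b }⟩

/-- Determinant (norm) of a Zorn vector matrix. -/
def det (x : Zorn2) : ZMod 2 := x.a * x.b - zdot x.alpha x.beta

/-- `x` has multiplicative order 2. -/
def ord2 (x : Zorn2) : Prop := x * x = 1 ∧ x ≠ 1

/-- `x` has multiplicative order 3. -/
def ord3 (x : Zorn2) : Prop := x * (x * x) = 1 ∧ x * x ≠ 1 ∧ x ≠ 1

end Zorn2

namespace Zorn2

theorem mul_a (x y : Zorn2) : (x * y).a = x.a * y.a + zdot x.alpha y.beta := rfl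

theorem mul_alpha (x y : Zorn2) (i : Fin 3) :
    (x * y).alpha i = x.a * y.alpha i + x.alpha i * y.b - zcross x.beta y.beta i := rfl

theorem mul_beta (x y : Zorn2) (i : Fin 3) :
    (x * y).beta i = x.beta i * y.a + x.b * y.beta i + zcross x.alpha y.alpha i := rfl

theorem mul_b (x y : Zorn2) : (x * y).b = zdot x.beta y.alpha + x.b * y.b := rfl

theorem zdot_comm (u v : Fin 3 → ZMod 2) : zdot u v = zdot v u := by
  simp only [zdot]; ring

theorem zdot_zero (u : Fin 3 → ZMod 2) : zdot u 0 = 0 := by simp [zdot]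

theorem zero_zdot (u : Fin 3 → ZMod 2) : zdot 0 u = 0 := by simp [zdot]

theorem zcross_self (u : Fin 3 → ZMod 2) (i : Fin 3) : zcross u u i = 0 := by
  fin_cases i <;> simp [zcross, mul_comm]

theorem det_mul (x y : Zorn2) : det (x * y) = det x * det y := by
  simp only [det, zdot, mul_a, mul_alpha, mul_beta, mul_b, zcross, Matrix.cons_val]
  ring

/-- Over `F₂`, a matrix of determinant 1 and trace 0 squares to the identity. -/
theorem mul_self_eq_one {x : Zorn2} (hd : det x = 1) (ht : x.a = x.b) : x * x = 1 := by
  obtain ⟨a, u, v, b⟩ := x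
  obtain rfl : a = b := ht
  have h : a * a + zdot u v = 1 := by simpa [det, CharTwo.sub_eq_add] using hd
  change Zorn2.mk _ _ _ _ = Zorn2.mk _ _ _ _
  congr 1
  · funext i
    simp [zcross_self, mul_comm, CharTwo.add_self_eq_zero]
  · funext i
    simp [zcross_self, mul_comm, CharTwo.add_self_eq_zero]
  · rw [zdot_comm, add_comm]
    exact h

end Zorn2

open Zorn2 in
theorem stmt13 (z : Zorn2) (hdz : Zorn2.det z = 1) (hz3 : Zorn2.ord3 z) :
    ∃ x : Zorn2, Zorn2.det x = 1 ∧ Zorn2.ord2 x ∧ Zorn2.ord2 (z * x) := by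
  have hab : z.a ≠ z.b := fun h => hz3.2.1 (mul_self_eq_one hdz h)
  have hF₂ : ∀ a b : ZMod 2, a ≠ b → a * b = 0 ∧ a + 1 = b := by decide
  obtain ⟨hmul, hadd⟩ := hF₂ _ _ hab
  have hdot : zdot z.alpha z.beta = 1 := by
    simpa [det, hmul, CharTwo.neg_eq] using hdz
  have hdx : det ⟨1, 0, z.beta, 1⟩ = 1 := by simp [det, zero_zdot]
  refine ⟨⟨1, 0, z.beta, 1⟩, hdx, ⟨mul_self_eq_one hdx rfl, fun h => ?_⟩,
    mul_self_eq_one (by rw [det_mul, hdz, hdx, one_mul]) ?_, fun h => ?_⟩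
  · have hbeta : z.beta = 0 := congrArg beta h
    rw [hbeta, zdot_zero] at hdot
    exact zero_ne_one hdot
  · simp [mul_a, mul_b, hdot, hadd, zdot_zero]
  · have halpha : z.alpha = 0 := by
      funext i
      have hi : (z * ⟨1, 0, z.beta, 1⟩).alpha i = 0 := congrFun (congrArg alpha h) i
      simpa [mul_alpha, zcross_self] using hi
    rw [halpha, zero_zdot] at hdot
    exact zero_ne_one hdot
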